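/- arXiv:0902.2003 — 2 statements merged into one kernel-verified Lean document; each statement's English description precedes it below -/
import Mathlib

section
/- Let α = (α_1,…,α_n), β = (β_1,…,β_n) be tuples of real numbers such that α_i − β_{i'} ∉ ℤ for all i, i'. Let A_1,…,A_{n_A} be the distinct values among e^{2πiα_1},…,e^{2πiα_n}, with m_{A_j} = #{i : e^{2πiα_i} = A_j}, so that Σ_j m_{A_j} = n. Then the n functions g_{A_j,r} (for 1 ≤ j ≤ n_A and 0 ≤ r < m_{A_j}), regarded as functions on the half-plane {Re w < 0}, are linearly independent over ℂ. -/
/-!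
On the half-plane `Re w < 0` the translation `T : w ↦ w + 2πi` is the monodromy around `z = 0`. By
Leibniz' rule it acts on the solutions with exponent `ν` by
`T g_{A,r} = A ∑_{k ≤ r} (r choose k) g_{A,k}`, so `T - A` is strictly triangular on `(g_{A,r})_r`
with the nonzero entries `A (r + 1)` next to the diagonal. Hence the `g_{A,r}` are generalized
eigenvectors of strictly increasing order for the eigenvalue `A`, as soon as `g_{A,0} ≠ 0`, and
solutions for different `A` lie in independent generalized eigenspaces.

The function `e^{-νw} g_{A,0}(w)` is a power series in `z = e^w` with coefficients `𝚪_{α,β}(l + ν)`,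
which are nonzero for large `l` since `ν - β_i ∉ ℤ`. Convergence comes from
`𝚪_{α,β}(s + 1) / 𝚪_{α,β}(s) = ∏ᵢ (β_i - s) / (s - α_i + 1)`, whose absolute value tends to `1` as
`s → ∞`; Cauchy's estimate on unit discs transfers it to the derivatives in `t`.
-/

open Complex Filter Set Finset
open scoped Real

noncomputable section

/-- The balanced gamma product `𝚪_{α,β}(s)`. -/
def gammaProd {n : ℕ} (α β : Fin n → ℂ) (s : ℂ) : ℂ :=
  (∏ i, (Complex.Gamma (s - α i + 1))⁻¹) * ∏ i, (Complex.Gamma (-s + β i + 1))⁻¹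

/-- The local solution `g_{A,r}(w) = Σ_{l≥0} (2πi)^{-r} (d/dt)^r [𝚪_{α,β}(l+t)e^{(l+t)w}]|_{t=ν}`
of the hypergeometric equation at `0`, in the exponential coordinate `z = e^w`. -/
def gA {n : ℕ} (α β : Fin n → ℝ) (ν : ℝ) (r : ℕ) (w : ℂ) : ℂ :=
  ∑' l : ℕ, ((2 * (π : ℂ) * Complex.I) ^ r)⁻¹ *
    iteratedDeriv r
      (fun t : ℂ =>
        gammaProd (fun i => (α i : ℂ)) (fun i => (β i : ℂ)) ((l : ℂ) + t) *
          Complex.exp (((l : ℂ) + t) * w)) (ν : ℂ)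

open Bornology
open scoped Topology

section LinearAlgebra

variable {R M ι : Type*} [CommRing R] [AddCommGroup M] [Module R M]

lemma pow_apply_eq_zero_of_strictTriangular {f : Module.End R M} {v : ℕ → M} {b : ℕ → ℕ → R}
    (hf : ∀ r, f (v r) = ∑ k ∈ Finset.range r, b r k • v k) {r s : ℕ} (hrs : r < s) :
    (f ^ s) (v r) = 0 := by
  induction s generalizing r with
  | zero => omega
  | succ s ih =>
    rw [pow_succ, Module.End.mul_apply, hf, map_sum]
    refine Finset.sum_eq_zero fun k hk => ?_
    have hkr := Finset.mem_range.1 hk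
    rw [map_smul, ih (by omega), smul_zero]

lemma pow_apply_self_of_strictTriangular {f : Module.End R M} {v : ℕ → M} {b : ℕ → ℕ → R}
    (hf : ∀ r, f (v r) = ∑ k ∈ Finset.range r, b r k • v k) (r : ℕ) :
    (f ^ r) (v r) = (∏ i ∈ Finset.range r, b (i + 1) i) • v 0 := by
  induction r with
  | zero => simp
  | succ r ih =>
    have hlower : ∑ k ∈ Finset.range r, (f ^ r) (b (r + 1) k • v k) = 0 :=
      Finset.sum_eq_zero fun k hk => by
        rw [map_smul, pow_apply_eq_zero_of_strictTriangular hf (Finset.mem_range.1 hk), smul_zero]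
    rw [pow_succ, Module.End.mul_apply, hf, map_sum, Finset.sum_range_succ, hlower, zero_add,
      map_smul, ih, smul_smul, Finset.prod_range_succ, mul_comm]

lemma linearIndependent_of_pow_apply [IsDomain R] [Module.IsTorsionFree R M]
    {f : Module.End R M} {v : ℕ → M} (hzero : ∀ r, (f ^ (r + 1)) (v r) = 0)
    (hne : ∀ r, (f ^ r) (v r) ≠ 0) : LinearIndependent R v := by
  refine linearIndependent_iff.2 fun l hl => ?_
  by_contra hl0
  have hsupp : l.support.Nonempty := Finsupp.support_nonempty_iff.2 hl0
  set r := l.support.max' hsupp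
  have hr : r ∈ l.support := l.support.max'_mem hsupp
  -- `f ^ r`, with `r` the top index of the relation, kills every other term.
  have hother : ∀ k ∈ l.support, k ≠ r → (f ^ r) (l k • v k) = 0 := fun k hk hkr => by
    have hlt : k + 1 ≤ r := lt_of_le_of_ne (l.support.le_max' k hk) hkr
    rw [map_smul, Module.End.pow_map_zero_of_le hlt (hzero k), smul_zero]
  have htop : (f ^ r) (l r • v r) = 0 := by
    rw [← Finset.sum_eq_single r hother (absurd hr), ← map_sum]
    exact (congrArg (f ^ r) hl).trans (map_zero _)
  rw [map_smul] at htop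
  exact smul_ne_zero (Finsupp.mem_support_iff.1 hr) (hne r) htop

lemma linearIndependent_sigma_of_mem_maxGenEigenspace [IsDomain R] [Module.IsTorsionFree R M]
    (T : Module.End R M) {a : ι → R} (ha : Function.Injective a) {κ : ι → Type*}
    {v : ∀ j, κ j → M} (hmem : ∀ j k, v j k ∈ T.maxGenEigenspace (a j))
    (hv : ∀ j, LinearIndependent R (v j)) :
    LinearIndependent R (fun p : Σ j, κ j => v p.1 p.2) := by
  have hspan : ∀ j, Submodule.span R (Set.range (v j)) ≤ T.maxGenEigenspace (a j) := fun j =>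
    Submodule.span_le.2 (Set.range_subset_iff.2 (hmem j))
  have hindep : iSupIndep fun j => T.maxGenEigenspace (a j) :=
    T.independent_maxGenEigenspace.comp ha
  refine linearIndependent_iUnion_finite hv fun i t _ hi => ?_
  exact (hindep.mono hspan).disjoint_biSup hi

lemma linearIndependent_of_apply_eq_smul_sum_choose [IsDomain R] [CharZero R]
    [Module.IsTorsionFree R M] (T : Module.End R M) {a : ι → R} (ha : Function.Injective a)
    (ha₀ : ∀ j, a j ≠ 0) {v : ι → ℕ → M}
    (hT : ∀ j r, T (v j r) = a j • ∑ k ∈ Finset.range (r + 1), (r.choose k : R) • v j k)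
    (hv₀ : ∀ j, v j 0 ≠ 0) :
    LinearIndependent R (fun p : ι × ℕ => v p.1 p.2) := by
  have htri : ∀ j r, (T - a j • 1) (v j r) =
      ∑ k ∈ Finset.range r, (a j * r.choose k) • v j k := fun j r => by
    simp [hT, Finset.sum_range_succ, Finset.smul_sum, mul_smul]
  have hzero : ∀ j r, ((T - a j • 1 : Module.End R M) ^ (r + 1)) (v j r) = 0 := fun j r =>
    pow_apply_eq_zero_of_strictTriangular (htri j) r.lt_succ_self
  have hne : ∀ j r, ((T - a j • 1 : Module.End R M) ^ r) (v j r) ≠ 0 := fun j r => by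
    rw [pow_apply_self_of_strictTriangular (b := fun r k => a j * r.choose k) (htri j)]
    refine smul_ne_zero (Finset.prod_ne_zero_iff.2 fun i _ => mul_ne_zero (ha₀ j) ?_) (hv₀ j)
    exact Nat.cast_ne_zero.2 (Nat.choose_pos i.le_succ).ne'
  exact (linearIndependent_sigma_of_mem_maxGenEigenspace T ha
    (fun j r => (Module.End.mem_maxGenEigenspace _ _ _).2 ⟨r + 1, hzero j r⟩)
    fun j => linearIndependent_of_pow_apply (hzero j) (hne j)).comp _
    (Equiv.sigmaEquivProd ι ℕ).symm.injective

end LinearAlgebra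

section Shifts

lemma eventually_forall_natCast_add {p : ℂ → Prop} (hp : ∀ᶠ s in cobounded ℂ, p s)
    {K : Set ℂ} (hK : Bornology.IsBounded K) :
    ∀ᶠ l : ℕ in atTop, ∀ t ∈ K, p (l + t) := by
  obtain ⟨B, -, hB⟩ := hasBasis_cobounded_norm.eventually_iff.1 hp
  obtain ⟨D, hD⟩ := hK.exists_norm_le
  filter_upwards [tendsto_natCast_atTop_atTop.eventually_ge_atTop (B + D)] with l hl t ht
  refine hB (?_ : B ≤ ‖(l : ℂ) + t‖)
  have htri := norm_sub_le ((l : ℂ) + t) t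
  rw [add_sub_cancel_right, Complex.norm_natCast] at htri
  linarith [hD t ht]

lemma exists_norm_natCast_add_le_geometric {ψ : ℂ → ℂ} (hψ : Continuous ψ) {q : ℝ} (hq : 0 ≤ q)
    (hratio : ∀ᶠ s in cobounded ℂ, ‖ψ (s + 1)‖ ≤ q * ‖ψ s‖)
    {K : Set ℂ} (hK : IsCompact K) :
    ∃ (L : ℕ) (C : ℝ), ∀ k : ℕ, ∀ t ∈ K, ‖ψ ((k + L : ℕ) + t)‖ ≤ C * q ^ k := by
  obtain ⟨L, hL⟩ := eventually_atTop.1 (eventually_forall_natCast_add hratio hK.isBounded)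
  obtain ⟨C, hC⟩ := hK.exists_bound_of_continuousOn (f := fun t => ψ (L + t)) (by fun_prop)
  refine ⟨L, C, fun k t ht => ?_⟩
  induction k with
  | zero => simpa using hC t ht
  | succ k ih =>
    calc ‖ψ ((k + 1 + L : ℕ) + t)‖ = ‖ψ ((k + L : ℕ) + t + 1)‖ := by
          congr 2; push_cast; ring
      _ ≤ q * ‖ψ ((k + L : ℕ) + t)‖ := hL (k + L) (Nat.le_add_left L k) t ht
      _ ≤ q * (C * q ^ k) := by gcongr
      _ = C * q ^ (k + 1) := by ring

lemma summable_iteratedDeriv_natCast_add {ψ : ℂ → ℂ} (hψ : Differentiable ℂ ψ) {q : ℝ}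
    (hq₀ : 0 ≤ q) (hq₁ : q < 1)
    (hratio : ∀ᶠ s in cobounded ℂ, ‖ψ (s + 1)‖ ≤ q * ‖ψ s‖) (r : ℕ) (c : ℂ) :
    Summable fun l : ℕ => iteratedDeriv r (fun t => ψ (l + t)) c := by
  obtain ⟨L, C, hC⟩ := exists_norm_natCast_add_le_geometric hψ.continuous hq₀ hratio
    (isCompact_closedBall c 1)
  refine (summable_nat_add_iff L).1 (Summable.of_norm_bounded
    (((summable_geometric_of_lt_one hq₀ hq₁).mul_left C).mul_left (r.factorial : ℝ)) fun k => ?_)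
  have hdiff : Differentiable ℂ fun t => ψ ((k + L : ℕ) + t) := hψ.comp (by fun_prop)
  simpa using Complex.norm_iteratedDeriv_le_of_forall_mem_sphere_norm_le r one_pos
    hdiff.diffContOnCl fun t ht => hC k t (Metric.sphere_subset_closedBall ht)

end Shifts

lemma eq_zero_of_eventually_hasSum_pow_mul_zero {𝕜 : Type*} [NontriviallyNormedField 𝕜]
    {a : ℕ → 𝕜} (h : ∀ᶠ z in 𝓝[≠] (0 : 𝕜), HasSum (fun l => z ^ l * a l) 0) : a = 0 := by
  have hps : HasFPowerSeriesAt (fun z : 𝕜 => ∑' l, z ^ l * a l)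
      (FormalMultilinearSeries.ofScalars 𝕜 a) 0 := by
    refine hasFPowerSeriesAt_iff.2 ?_
    filter_upwards [eventually_nhdsWithin_iff.1 h] with z hz
    suffices hsum : Summable fun l => z ^ l * a l by
      simpa only [zero_add, smul_eq_mul, FormalMultilinearSeries.coeff_ofScalars] using hsum.hasSum
    rcases eq_or_ne z 0 with rfl | hz₀
    · simpa only [smul_eq_mul] using (HasSum.hasSum_at_zero (𝕜 := 𝕜) a).summable
    · exact (hz hz₀).summable
  have hzero : (fun z : 𝕜 => ∑' l, z ^ l * a l) =ᶠ[𝓝 0] 0 :=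
    hps.analyticAt.frequently_zero_iff_eventually_zero.1 (h.mono fun _ hz => hz.tsum_eq).frequently
  rw [← FormalMultilinearSeries.ofScalars_series_eq_zero 𝕜]
  exact (hps.congr hzero).eq_zero

section FrobeniusSeries

/-- The `l`-th term `(2πi)^{-r} (d/dt)^r [φ(l+t) e^{(l+t)w}]|_{t=c}` of the Frobenius series with
coefficient function `φ`, exponent `c` and logarithmic order `r`, in the coordinate `z = e^w`. -/
def frobeniusTerm (φ : ℂ → ℂ) (c : ℂ) (r : ℕ) (w : ℂ) (l : ℕ) : ℂ :=
  ((2 * (π : ℂ) * Complex.I) ^ r)⁻¹ *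
    iteratedDeriv r (fun t : ℂ => φ ((l : ℂ) + t) * Complex.exp (((l : ℂ) + t) * w)) c

/-- The Frobenius series with coefficient function `φ`, exponent `c` and logarithmic order `r`: the
common form of the local solutions at a regular singular point. Like every `tsum` it is `0` where
the terms are not summable. -/
def frobeniusSeries (φ : ℂ → ℂ) (c : ℂ) (r : ℕ) (w : ℂ) : ℂ :=
  ∑' l : ℕ, frobeniusTerm φ c r w l

/-- The monodromy around `z = 0` in the coordinate `z = e^w`: translation by `2πi`, acting on
functions on the half-plane `{Re w < 0}`. -/
def monodromy : Module.End ℂ ({w : ℂ // w.re < 0} → ℂ) :=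
  LinearMap.funLeft ℂ ℂ fun w => ⟨w + 2 * (π : ℂ) * Complex.I, by simpa using w.2⟩

variable {φ : ℂ → ℂ}

lemma frobeniusTerm_zero (c w : ℂ) :
    frobeniusTerm φ c 0 w =
      fun l : ℕ => Complex.exp (c * w) * (Complex.exp w ^ l * φ (l + c)) := by
  funext l
  rw [frobeniusTerm, pow_zero, inv_one, one_mul, iteratedDeriv_zero, add_mul, Complex.exp_add,
    Complex.exp_nat_mul]
  ring

lemma frobeniusTerm_add_two_pi_I (hφ : Differentiable ℂ φ) (c : ℂ) (r : ℕ) (w : ℂ) (l : ℕ) :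
    frobeniusTerm φ c r (w + 2 * (π : ℂ) * Complex.I) l =
      Complex.exp (2 * (π : ℂ) * Complex.I * c) *
        ∑ k ∈ Finset.range (r + 1), (r.choose k : ℂ) * frobeniusTerm φ c k w l := by
  have hexp : ∀ t : ℂ, Complex.exp ((l + t) * (w + 2 * (π : ℂ) * Complex.I)) =
      Complex.exp ((l + t) * w) * Complex.exp (2 * (π : ℂ) * Complex.I * t) := fun t => by
    rw [← Complex.exp_add, Complex.exp_eq_exp_iff_exists_int]
    exact ⟨l, by push_cast; ring⟩
  have hdiff : Differentiable ℂ fun t : ℂ => φ (l + t) * Complex.exp ((l + t) * w) :=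
    (hφ.comp (by fun_prop)).mul (by fun_prop)
  simp only [frobeniusTerm, hexp, ← mul_assoc]
  rw [iteratedDeriv_fun_mul hdiff.contDiff.contDiffAt (by fun_prop), Finset.mul_sum,
    Finset.mul_sum]
  refine Finset.sum_congr rfl fun k hk => ?_
  have hpow : ((2 * (π : ℂ) * Complex.I) ^ r)⁻¹ * (2 * (π : ℂ) * Complex.I) ^ (r - k) =
      ((2 * (π : ℂ) * Complex.I) ^ k)⁻¹ := by
    rw [pow_sub₀ _ Complex.two_pi_I_ne_zero (Nat.lt_succ_iff.1 (Finset.mem_range.1 hk)),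
      inv_mul_cancel_left₀ (pow_ne_zero r Complex.two_pi_I_ne_zero)]
  rw [iteratedDeriv_cexp_const_mul, ← hpow]
  ring

lemma summable_frobeniusTerm (hφ : Differentiable ℂ φ)
    (hratio : ∀ ρ : ℝ, 1 < ρ → ∀ᶠ s in cobounded ℂ, ‖φ (s + 1)‖ ≤ ρ * ‖φ s‖)
    (c : ℂ) (r : ℕ) {w : ℂ} (hw : w.re < 0) : Summable (frobeniusTerm φ c r w) := by
  have hexp_ratio : ∀ᶠ s in cobounded ℂ, ‖φ (s + 1) * Complex.exp ((s + 1) * w)‖ ≤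
      Real.exp (w.re / 2) * ‖φ s * Complex.exp (s * w)‖ := by
    filter_upwards [hratio (Real.exp (-w.re / 2)) (Real.one_lt_exp_iff.2 (by linarith))] with s hs
    have hsplit : Real.exp (-w.re / 2) * Real.exp w.re = Real.exp (w.re / 2) := by
      rw [← Real.exp_add]; ring_nf
    rw [add_mul, one_mul, Complex.exp_add, norm_mul, norm_mul, norm_mul, Complex.norm_exp w]
    calc ‖φ (s + 1)‖ * (‖Complex.exp (s * w)‖ * Real.exp w.re)
        ≤ Real.exp (-w.re / 2) * ‖φ s‖ * (‖Complex.exp (s * w)‖ * Real.exp w.re) := by gcongr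
      _ = Real.exp (w.re / 2) * (‖φ s‖ * ‖Complex.exp (s * w)‖) := by rw [← hsplit]; ring
  exact (summable_iteratedDeriv_natCast_add (ψ := fun s => φ s * Complex.exp (s * w))
    (hφ.mul (by fun_prop)) (Real.exp_pos _).le (Real.exp_lt_one_iff.2 (by linarith)) hexp_ratio
    r c).mul_left _

lemma frobeniusSeries_add_two_pi_I (hφ : Differentiable ℂ φ) {c w : ℂ} {r : ℕ}
    (hsum : ∀ k ≤ r, Summable (frobeniusTerm φ c k w)) :
    frobeniusSeries φ c r (w + 2 * (π : ℂ) * Complex.I) =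
      Complex.exp (2 * (π : ℂ) * Complex.I * c) *
        ∑ k ∈ Finset.range (r + 1), (r.choose k : ℂ) * frobeniusSeries φ c k w := by
  simp only [frobeniusSeries, frobeniusTerm_add_two_pi_I hφ, ← tsum_mul_left (ι := ℕ)]
  rw [tsum_mul_left, Summable.tsum_finsetSum fun k hk =>
    (hsum k (Nat.lt_succ_iff.1 (Finset.mem_range.1 hk))).mul_left _]

lemma exists_frobeniusSeries_zero_ne_zero {c : ℂ}
    (hsum : ∀ w : ℂ, w.re < 0 → Summable (frobeniusTerm φ c 0 w))
    {l : ℕ} (hl : φ (l + c) ≠ 0) :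
    ∃ w : ℂ, w.re < 0 ∧ frobeniusSeries φ c 0 w ≠ 0 := by
  by_contra! hvanish
  have hcoeff : ∀ᶠ z in 𝓝[≠] (0 : ℂ), HasSum (fun l : ℕ => z ^ l * φ (l + c)) 0 := by
    filter_upwards [self_mem_nhdsWithin, nhdsWithin_le_nhds (Metric.ball_mem_nhds 0 one_pos)]
      with z hz₀ hz₁
    have hre : (Complex.log z).re < 0 := by
      rw [Complex.log_re]
      exact Real.log_neg (norm_pos_iff.2 hz₀) (mem_ball_zero_iff.1 hz₁)
    have hzero := (hsum _ hre).hasSum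
    rw [← frobeniusSeries, hvanish _ hre] at hzero
    simp only [frobeniusTerm_zero, Complex.exp_log hz₀] at hzero
    rwa [← mul_zero (Complex.exp (c * Complex.log z)),
      hasSum_mul_left_iff (Complex.exp_ne_zero _)] at hzero
  exact hl (congrFun (eq_zero_of_eventually_hasSum_pow_mul_zero hcoeff) l)

theorem linearIndependent_frobeniusSeries {ι : Type*} (hφ : Differentiable ℂ φ)
    (hratio : ∀ ρ : ℝ, 1 < ρ → ∀ᶠ s in cobounded ℂ, ‖φ (s + 1)‖ ≤ ρ * ‖φ s‖)
    {c : ι → ℂ} (hc : Function.Injective fun j => Complex.exp (2 * (π : ℂ) * Complex.I * c j))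
    (hne : ∀ j, ∃ l : ℕ, φ (l + c j) ≠ 0) :
    LinearIndependent ℂ (fun (p : ι × ℕ) (w : {w : ℂ // w.re < 0}) =>
      frobeniusSeries φ (c p.1) p.2 w) := by
  refine linearIndependent_of_apply_eq_smul_sum_choose monodromy hc
    (fun j => Complex.exp_ne_zero _)
    (v := fun j r (w : {w : ℂ // w.re < 0}) => frobeniusSeries φ (c j) r w)
    (fun j r => ?_) fun j hzero => ?_
  · ext w
    simpa [monodromy, LinearMap.funLeft_apply] using frobeniusSeries_add_two_pi_I hφ
      fun k _ => summable_frobeniusTerm hφ hratio (c j) k w.2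
  · obtain ⟨l, hl⟩ := hne j
    obtain ⟨w, hw, hw₀⟩ := exists_frobeniusSeries_zero_ne_zero
      (fun w hw => summable_frobeniusTerm hφ hratio (c j) 0 hw) hl
    exact hw₀ (congrFun hzero ⟨w, hw⟩)

end FrobeniusSeries

lemma tendsto_add_div_add_cobounded {𝕜 : Type*} [NormedField 𝕜] (a b : 𝕜) :
    Tendsto (fun s : 𝕜 => (s + a) / (s + b)) (cobounded 𝕜) (𝓝 1) := by
  have hcob : Tendsto (fun s : 𝕜 => s + b) (cobounded 𝕜) (cobounded 𝕜) :=
    tendsto_add_const_cobounded b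
  have hlim : Tendsto (fun s : 𝕜 => 1 + (a - b) * (s + b)⁻¹) (cobounded 𝕜) (𝓝 1) := by
    simpa using ((tendsto_inv₀_cobounded.comp hcob).const_mul (a - b)).const_add 1
  refine hlim.congr' ?_
  filter_upwards [hcob.eventually (Bornology.eventually_ne_cobounded 0)] with s hs
  field_simp
  ring

section GammaProd

variable {n : ℕ} (α β : Fin n → ℂ)

lemma differentiable_gammaProd : Differentiable ℂ (gammaProd α β) := by
  have hinv : Differentiable ℂ fun s : ℂ => (Complex.Gamma s)⁻¹ :=
    Complex.differentiable_one_div_Gamma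
  exact (Differentiable.fun_finsetProd fun i _ => hinv.comp (by fun_prop)).mul
    (Differentiable.fun_finsetProd fun i _ => hinv.comp (by fun_prop))

lemma gammaProd_add_one_mul_prod (s : ℂ) :
    gammaProd α β (s + 1) * ∏ i, (s - α i + 1) = gammaProd α β s * ∏ i, (-s + β i) := by
  have hα : ∏ i, (Complex.Gamma (s - α i + 1))⁻¹ =
      (∏ i, (s - α i + 1)) * ∏ i, (Complex.Gamma (s + 1 - α i + 1))⁻¹ := by
    rw [← Finset.prod_mul_distrib]
    refine Finset.prod_congr rfl fun i _ => ?_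
    rw [Complex.one_div_Gamma_eq_self_mul_one_div_Gamma_add_one (s - α i + 1)]
    ring_nf
  have hβ : ∏ i, (Complex.Gamma (-(s + 1) + β i + 1))⁻¹ =
      (∏ i, (-s + β i)) * ∏ i, (Complex.Gamma (-s + β i + 1))⁻¹ := by
    rw [← Finset.prod_mul_distrib]
    refine Finset.prod_congr rfl fun i _ => ?_
    rw [← Complex.one_div_Gamma_eq_self_mul_one_div_Gamma_add_one (-s + β i)]
    ring_nf
  rw [gammaProd, gammaProd, hα, hβ]
  ring

lemma eventually_norm_gammaProd_add_one_le {ρ : ℝ} (hρ : 1 < ρ) :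
    ∀ᶠ s in cobounded ℂ, ‖gammaProd α β (s + 1)‖ ≤ ρ * ‖gammaProd α β s‖ := by
  have hlim : Tendsto (fun s => ∏ i, ‖(s + -β i) / (s + (1 - α i))‖) (cobounded ℂ)
      (𝓝 1) := by
    simpa using tendsto_finsetProd Finset.univ fun i _ =>
      (tendsto_add_div_add_cobounded (-β i) (1 - α i)).norm
  have hden : ∀ᶠ s in cobounded ℂ, ∀ i, s - α i + 1 ≠ 0 := by
    refine eventually_all.2 fun i => ?_
    filter_upwards [Bornology.eventually_ne_cobounded (α i - 1)] with s hs h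
    exact hs (by linear_combination h)
  filter_upwards [hlim.eventually_le_const hρ, hden] with s hs hne
  have hpos : 0 < ∏ i, ‖s - α i + 1‖ := Finset.prod_pos fun i _ => norm_pos_iff.2 (hne i)
  have hfactor : ∀ i, ‖(s + -β i) / (s + (1 - α i))‖ = ‖-s + β i‖ / ‖s - α i + 1‖ := fun i => by
    rw [norm_div, ← norm_neg (s + -β i)]
    ring_nf
  simp only [hfactor, Finset.prod_div_distrib, div_le_iff₀ hpos] at hs
  refine le_of_mul_le_mul_right ?_ hpos
  calc ‖gammaProd α β (s + 1)‖ * ∏ i, ‖s - α i + 1‖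
      = ‖gammaProd α β s‖ * ∏ i, ‖-s + β i‖ := by
        simpa only [norm_mul, norm_prod] using congrArg norm (gammaProd_add_one_mul_prod α β s)
    _ ≤ ‖gammaProd α β s‖ * (ρ * ∏ i, ‖s - α i + 1‖) := by gcongr
    _ = ρ * ‖gammaProd α β s‖ * ∏ i, ‖s - α i + 1‖ := by ring

variable {α β}

lemma gammaProd_ne_zero_iff {s : ℂ} :
    gammaProd α β s ≠ 0 ↔ (∀ i, Complex.Gamma (s - α i + 1) ≠ 0) ∧
      ∀ i, Complex.Gamma (-s + β i + 1) ≠ 0 := by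
  simp [gammaProd, Finset.prod_ne_zero_iff]

variable (α) in
lemma eventually_gammaProd_natCast_add_ne_zero {c : ℂ} (hc : ∀ i, ∀ k : ℤ, c - β i ≠ k) :
    ∀ᶠ l : ℕ in atTop, gammaProd α β (l + c) ≠ 0 := by
  have hα : ∀ᶠ l : ℕ in atTop, ∀ i, Complex.Gamma (l + c - α i + 1) ≠ 0 := by
    refine eventually_all.2 fun i => ?_
    filter_upwards [tendsto_natCast_atTop_atTop.eventually_gt_atTop (α i - c).re] with l hl
    refine Complex.Gamma_ne_zero_of_re_pos ?_
    simp only [Complex.add_re, Complex.sub_re, Complex.natCast_re, Complex.one_re] at hl ⊢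
    linarith
  filter_upwards [hα] with l hl
  refine gammaProd_ne_zero_iff.2 ⟨hl, fun i => Complex.Gamma_ne_zero fun k hk => ?_⟩
  refine hc i (k + 1 - l) ?_
  push_cast
  linear_combination -hk

end GammaProd

lemma gA_eq_frobeniusSeries {n : ℕ} (α β : Fin n → ℝ) (ν : ℝ) (r : ℕ) (w : ℂ) :
    gA α β ν r w =
      frobeniusSeries (gammaProd (fun i => (α i : ℂ)) (fun i => (β i : ℂ))) ν r w :=
  rfl

theorem local_solutions_at_zero_linearIndependent_general {ι : Type*} {n : ℕ} (α β : Fin n → ℂ)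
    {c : ι → ℂ} (m : ι → ℕ) (hres : ∀ j i, ∀ k : ℤ, c j - β i ≠ k)
    (hc : Function.Injective fun j => Complex.exp (2 * (π : ℂ) * Complex.I * c j)) :
    LinearIndependent ℂ (fun (p : Σ j, Fin (m j)) (w : {w : ℂ // w.re < 0}) =>
      frobeniusSeries (gammaProd α β) (c p.1) p.2 w) := by
  have hpair : Function.Injective fun p : Σ j, Fin (m j) => (p.1, (p.2 : ℕ)) :=
    (Equiv.sigmaEquivProd ι ℕ).injective.comp
      (Function.injective_id.sigma_map fun _ => Fin.val_injective)
  have hall : LinearIndependent ℂ (fun (p : ι × ℕ) (w : {w : ℂ // w.re < 0}) =>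
      frobeniusSeries (gammaProd α β) (c p.1) p.2 w) :=
    linearIndependent_frobeniusSeries (differentiable_gammaProd α β)
      (fun _ hρ => eventually_norm_gammaProd_add_one_le α β hρ) hc
      fun j => (eventually_gammaProd_natCast_add_ne_zero α (hres j)).exists
  have hsub := hall.comp _ hpair
  simpa only [Function.comp_def] using hsub

/-- Let `α, β` be real tuples with `αᵢ - β_{i'} ∉ ℤ` for all `i, i'`. Let
`A₁,…,A_{n_A}` be the distinct values among the `e^{2πiαᵢ}`, with multiplicities
`m_{Aⱼ} = #{i : e^{2πiαᵢ} = Aⱼ}` (so `Σⱼ m_{Aⱼ} = n`) and `ν(Aⱼ) = min{αᵢ : e^{2πiαᵢ} = Aⱼ}`.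
Then the `n` functions `g_{Aⱼ,r}` (`1 ≤ j ≤ n_A`, `0 ≤ r < m_{Aⱼ}`), regarded as functions on
the half-plane `{Re w < 0}`, are linearly independent over `ℂ`. -/
theorem local_solutions_at_zero_linearIndependent (n nA : ℕ) (α β : Fin n → ℝ)
    (hres : ∀ i i' : Fin n, ∀ k : ℤ, α i - β i' ≠ (k : ℝ))
    (A : Fin nA → ℂ) (hinj : Function.Injective A)
    (hval : ∀ j, ∃ i, Complex.exp (2 * (π : ℂ) * Complex.I * (α i : ℂ)) = A j)
    (hsurj : ∀ i, ∃ j, Complex.exp (2 * (π : ℂ) * Complex.I * (α i : ℂ)) = A j)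
    (m : Fin nA → ℕ)
    (hm : ∀ j, m j =
      Nat.card {i : Fin n // Complex.exp (2 * (π : ℂ) * Complex.I * (α i : ℂ)) = A j})
    (hn : ∑ j, m j = n)
    (ν : Fin nA → ℝ)
    (hν₁ : ∀ j, ∃ i, α i = ν j ∧ Complex.exp (2 * (π : ℂ) * Complex.I * (α i : ℂ)) = A j)
    (hν₂ : ∀ j i, Complex.exp (2 * (π : ℂ) * Complex.I * (α i : ℂ)) = A j → ν j ≤ α i) :
    LinearIndependent ℂ
      (fun p : Σ j : Fin nA, Fin (m j) =>
        fun w : {w : ℂ // w.re < 0} => gA α β (ν p.1) (p.2 : ℕ) (w : ℂ)) := by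
  choose i hαν hA using hν₁
  obtain rfl : (fun j => Complex.exp (2 * (π : ℂ) * Complex.I * ν j)) = A :=
    funext fun j => hαν j ▸ hA j
  have hresν : ∀ j i', ∀ k : ℤ, (ν j : ℂ) - β i' ≠ k := fun j i' k => by
    exact_mod_cast hαν j ▸ hres (i j) i' k
  have hgeneral := local_solutions_at_zero_linearIndependent_general (fun i => (α i : ℂ))
    (fun i => (β i : ℂ)) m hresν hinj
  simp only [gA_eq_frobeniusSeries]
  exact hgeneral
end
end

section
/- Let α_1,…,α_n, β_1,…,β_n ∈ ℂ with Re(β_i − α_i) > 0 for each i, and let H = h_{α_1,β_1} ∗ h_{α_2,β_2} ∗ ⋯ ∗ h_{α_n,β_n} be the n-fold convolution over ℝ. Then H is a continuous function supported in [−n/2, n/2], and for every s ∈ ℂ one has ∫_ℝ e^{−2πisφ} H(φ) dφ = 𝚪_{α,β}(s). -/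
open Complex Filter Set Finset MeasureTheory
open scoped Real

noncomputable section

/-- The function `h_{α,β}(φ) = e^{2πiαφ}(1 + e^{2πiφ})^{β-α}/Γ(β-α+1)` on `(-1/2, 1/2)`,
extended by `0` (principal branch power). -/
def hfun (α β : ℂ) : ℝ → ℂ := fun φ =>
  if φ ∈ Set.Ioo (-(1 : ℝ) / 2) ((1 : ℝ) / 2) then
    Complex.exp (2 * (π : ℂ) * Complex.I * α * (φ : ℂ)) *
      (1 + Complex.exp (2 * (π : ℂ) * Complex.I * (φ : ℂ))) ^ (β - α) /
        Complex.Gamma (β - α + 1)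
  else 0

/-- Convolution over `ℝ`: `(f ∗ g)(x) = ∫ f(x - y) g(y) dy`. -/
def conv (f g : ℝ → ℂ) : ℝ → ℂ := fun x => ∫ y : ℝ, f (x - y) * g y

/-- The iterated convolution `f₁ ∗ (f₂ ∗ (⋯ ∗ fₙ))` of a list of functions. -/
def convList : List (ℝ → ℂ) → (ℝ → ℂ)
  | [] => fun _ => 0
  | [f] => f
  | f :: g :: rest => conv f (convList (g :: rest))

/-!
Convolution becomes multiplication under the Fourier–Laplace transform, so only a single factor
`h_{α,β}` has to be transformed. With `c = β - α` and `t = s - α`, its transform is, up to the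
factor `Γ(c + 1)`, the mean of `e^{-tw}(1 + e^w)^c` over the segment from `-πi` to `πi`. For
`Re t < 0`, Cauchy's theorem pushes this segment to `Re w = -∞`. Along the edges `Im w = ±π`, where
`e^w` is negative, the integrals are beta integrals with the phases `e^{∓πit}`, and Euler's
reflection formula turns the resulting `sin(-πt)Γ(-t)` into `π/Γ(t + 1)`. Both sides are entire
in `s`, so the identity extends from this half-plane to `ℂ`.
-/

/-! ### Convolutions and the Fourier–Laplace transform -/

/-- The Fourier–Laplace transform `s ↦ ∫ e^{-2πisφ} f(φ) dφ`, that is, the Fourier integral at a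
complex frequency; it is the junk value `0` when the integral diverges. -/
def fourierLaplace (f : ℝ → ℂ) (s : ℂ) : ℂ :=
  ∫ φ : ℝ, exp (-(2 * (π : ℂ) * I) * s * (φ : ℂ)) * f φ

open scoped Pointwise

section FourierLaplace

variable {f g : ℝ → ℂ}

theorem conv_eq_convolution (f g : ℝ → ℂ) :
    conv f g = convolution f g (ContinuousLinearMap.mul ℝ ℂ) volume :=
  funext fun _ => (convolution_mul_swap (𝕜 := ℂ)).symm

theorem continuous_conv (hf : Continuous f) (hg : Continuous g) (hg' : HasCompactSupport g) :
    Continuous (conv f g) :=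
  conv_eq_convolution f g ▸ hg'.continuous_convolution_right _ hf.locallyIntegrable hg

theorem hasCompactSupport_conv (hf : HasCompactSupport f) (hg : HasCompactSupport g) :
    HasCompactSupport (conv f g) :=
  conv_eq_convolution f g ▸ hf.convolution _ hg

theorem support_conv_subset (f g : ℝ → ℂ) :
    Function.support (conv f g) ⊆ Function.support f + Function.support g :=
  conv_eq_convolution f g ▸ support_convolution_subset _

theorem exp_mul_conv (z : ℂ) (f g : ℝ → ℂ) :
    (fun x : ℝ => exp (z * x) * conv f g x) =
      conv (fun x : ℝ => exp (z * x) * f x) fun x : ℝ => exp (z * x) * g x := by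
  funext x
  simp only [conv, ← integral_const_mul]
  refine integral_congr_ae (.of_forall fun y => ?_)
  have exp_split : exp (z * x) = exp (z * (x - y : ℝ)) * exp (z * y) := by
    rw [← exp_add, ← mul_add, ← ofReal_add, sub_add_cancel]
  simp only [exp_split]
  ring

theorem integrable_exp_mul_conv {z : ℂ} (hf : Integrable fun φ : ℝ => exp (z * φ) * f φ)
    (hg : Integrable fun φ : ℝ => exp (z * φ) * g φ) :
    Integrable fun φ : ℝ => exp (z * φ) * conv f g φ := by
  rw [exp_mul_conv, conv_eq_convolution]
  exact hf.integrable_convolution _ hg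

theorem fourierLaplace_conv {s : ℂ}
    (hf : Integrable fun φ : ℝ => exp (-(2 * (π : ℂ) * I) * s * (φ : ℂ)) * f φ)
    (hg : Integrable fun φ : ℝ => exp (-(2 * (π : ℂ) * I) * s * (φ : ℂ)) * g φ) :
    fourierLaplace (conv f g) s = fourierLaplace f s * fourierLaplace g s := by
  simp only [fourierLaplace, exp_mul_conv]
  rw [conv_eq_convolution, integral_convolution _ hf hg, ContinuousLinearMap.mul_apply']

theorem integrable_exp_mul_of_hasCompactSupport (hf : Integrable f) (hf' : HasCompactSupport f)
    (z : ℂ) : Integrable fun φ : ℝ => exp (z * φ) * f φ := by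
  have on_tsupport : IntegrableOn (fun φ : ℝ => exp (z * φ) * f φ) (tsupport f) :=
    hf.integrableOn.continuousOn_mul (by fun_prop) hf'
  exact (integrableOn_iff_integrable_of_support_subset <|
    (Function.support_mul_subset_right _ _).trans (subset_tsupport f)).1 on_tsupport

theorem differentiable_fourierLaplace (hf : Integrable f) (hf' : HasCompactSupport f) :
    Differentiable ℂ (fourierLaplace f) := by
  intro s₀
  set e' : ℂ → ℝ → ℂ := fun s φ =>
    exp (-(2 * (π : ℂ) * I) * s * φ) * (-(2 * (π : ℂ) * I) * φ) with he'
  have e'_cont : Continuous fun p : ℂ × ℝ => e' p.1 p.2 := by fun_prop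
  obtain ⟨C, hC⟩ := ((isCompact_closedBall s₀ 1).prod hf').exists_bound_of_continuousOn
    e'_cont.continuousOn
  have e_cont (s : ℂ) : Continuous fun φ : ℝ => exp (-(2 * (π : ℂ) * I) * s * φ) := by fun_prop
  have e'_bound (φ : ℝ) (s : ℂ) (hs : s ∈ Metric.ball s₀ 1) : ‖e' s φ * f φ‖ ≤ C * ‖f φ‖ := by
    by_cases hφ : φ ∈ tsupport f
    · rw [norm_mul]
      gcongr
      exact hC (s, φ) ⟨Metric.ball_subset_closedBall hs, hφ⟩
    · simp [image_eq_zero_of_notMem_tsupport hφ]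
  have e_deriv (φ : ℝ) (s : ℂ) :
      HasDerivAt (fun s => exp (-(2 * (π : ℂ) * I) * s * φ) * f φ) (e' s φ * f φ) s := by
    have exponent_deriv := ((hasDerivAt_id s).const_mul (-(2 * (π : ℂ) * I))).mul_const (φ : ℂ)
    simpa only [he', id_eq, mul_one] using exponent_deriv.cexp.mul_const (f φ)
  exact (hasDerivAt_integral_of_dominated_loc_of_deriv_le (Metric.ball_mem_nhds s₀ one_pos)
    (.of_forall fun s => (e_cont s).aestronglyMeasurable.mul hf.aestronglyMeasurable)
    (integrable_exp_mul_of_hasCompactSupport hf hf' _)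
    ((by fun_prop : Continuous (e' s₀)).aestronglyMeasurable.mul hf.aestronglyMeasurable)
    (.of_forall e'_bound) (hf.norm.const_mul C)
    (.of_forall fun φ s _ => e_deriv φ s)).2.differentiableAt

theorem hasCompactSupport_convList {L : List (ℝ → ℂ)} (hs : ∀ f ∈ L, HasCompactSupport f) :
    HasCompactSupport (convList L) := by
  induction L using convList.induct with
  | case1 => exact .zero
  | case2 f => exact hs f (List.mem_singleton_self f)
  | case3 f g rest ih =>
    rw [List.forall_mem_cons] at hs
    exact hasCompactSupport_conv hs.1 (ih hs.2)

theorem continuous_convList {L : List (ℝ → ℂ)} (hc : ∀ f ∈ L, Continuous f)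
    (hs : ∀ f ∈ L, HasCompactSupport f) : Continuous (convList L) := by
  induction L using convList.induct with
  | case1 => exact continuous_const
  | case2 f => exact hc f (List.mem_singleton_self f)
  | case3 f g rest ih =>
    rw [List.forall_mem_cons] at hc hs
    exact continuous_conv hc.1 (ih hc.2 hs.2) (hasCompactSupport_convList hs.2)

theorem support_convList_subset {r : ℝ} {L : List (ℝ → ℂ)}
    (hL : ∀ f ∈ L, Function.support f ⊆ Set.Icc (-r) r) :
    Function.support (convList L) ⊆ Set.Icc (-(L.length * r)) (L.length * r) := by
  induction L using convList.induct with
  | case1 => simp [convList]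
  | case2 f => simpa [convList] using hL
  | case3 f g rest ih =>
    rw [List.forall_mem_cons] at hL
    calc Function.support (conv f (convList (g :: rest)))
        ⊆ Set.Icc (-r) r + Set.Icc (-((g :: rest).length * r)) ((g :: rest).length * r) :=
          (support_conv_subset _ _).trans (Set.add_subset_add hL.1 (ih hL.2))
      _ ⊆ Set.Icc (-r + -((g :: rest).length * r)) (r + (g :: rest).length * r) :=
          Set.Icc_add_Icc_subset _ _ _ _
      _ = Set.Icc (-((f :: g :: rest).length * r)) ((f :: g :: rest).length * r) := by
          congr 1 <;> push_cast [List.length_cons] <;> ring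

theorem integrable_exp_mul_convList {z : ℂ} {L : List (ℝ → ℂ)}
    (hL : ∀ f ∈ L, Integrable fun φ : ℝ => exp (z * φ) * f φ) :
    Integrable fun φ : ℝ => exp (z * φ) * convList L φ := by
  induction L using convList.induct with
  | case1 => simp [convList]
  | case2 f => exact hL f (List.mem_singleton_self f)
  | case3 f g rest ih =>
    rw [List.forall_mem_cons] at hL
    exact integrable_exp_mul_conv hL.1 (ih hL.2)

theorem fourierLaplace_convList {s : ℂ} {L : List (ℝ → ℂ)} (hne : L ≠ [])
    (hL : ∀ f ∈ L, Integrable fun φ : ℝ => exp (-(2 * (π : ℂ) * I) * s * (φ : ℂ)) * f φ) :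
    fourierLaplace (convList L) s = (L.map fun f => fourierLaplace f s).prod := by
  induction L using convList.induct with
  | case1 => contradiction
  | case2 f => simp [convList]
  | case3 f g rest ih =>
    rw [List.forall_mem_cons] at hL
    rw [List.map_cons, List.prod_cons, ← ih (List.cons_ne_nil _ _) hL.2]
    exact fourierLaplace_conv hL.1 (integrable_exp_mul_convList hL.2)

end FourierLaplace

/-! ### Cauchy's theorem on a left half-strip -/

theorem integral_boundary_leftHalfStrip {E : Type*} [NormedAddCommGroup E] [NormedSpace ℂ E]
    [CompleteSpace E] {f : ℂ → E} {x₀ a b : ℝ}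
    (hc : ContinuousOn f (Set.Iic x₀ ×ℂ Set.uIcc a b))
    (hd : DifferentiableOn ℂ f (Set.Iio x₀ ×ℂ Set.Ioo (min a b) (max a b)))
    (ha : IntegrableOn (fun x : ℝ => f (x + a * I)) (Set.Iic x₀))
    (hb : IntegrableOn (fun x : ℝ => f (x + b * I)) (Set.Iic x₀))
    (hlim : Tendsto (fun R : ℝ => ∫ y in a..b, f (R + y * I)) atBot (nhds 0)) :
    I • ∫ y in a..b, f (x₀ + y * I) =
      (∫ x in Set.Iic x₀, f (x + b * I)) - ∫ x in Set.Iic x₀, f (x + a * I) := by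
  have rect (R : ℝ) (hR : R ≤ x₀) :
      I • (∫ y in a..b, f (x₀ + y * I)) - I • ∫ y in a..b, f (R + y * I) =
        (∫ x in R..x₀, f (x + b * I)) - ∫ x in R..x₀, f (x + a * I) := by
    have closed_sub : Set.uIcc R x₀ ⊆ Set.Iic x₀ := by
      simpa only [Set.uIcc_of_le hR] using Set.Icc_subset_Iic_self
    have open_sub : Set.Ioo (min R x₀) (max R x₀) ⊆ Set.Iio x₀ := by
      simpa only [max_eq_right hR] using Set.Ioo_subset_Iio_self
    have := integral_boundary_rect_eq_zero_of_continuousOn_of_differentiableOn f ⟨R, a⟩ ⟨x₀, b⟩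
      (hc.mono fun w hw => ⟨closed_sub hw.1, hw.2⟩) (hd.mono fun w hw => ⟨open_sub hw.1, hw.2⟩)
    rw [← sub_eq_zero, ← this]
    abel
  have left_side := (hlim.const_smul I).const_sub (I • ∫ y in a..b, f (x₀ + y * I))
  have right_side := (intervalIntegral_tendsto_integral_Iic x₀ hb tendsto_id).sub
    (intervalIntegral_tendsto_integral_Iic x₀ ha tendsto_id)
  rw [smul_zero, sub_zero] at left_side
  refine tendsto_nhds_unique (left_side.congr' ?_) right_side
  filter_upwards [eventually_le_atBot x₀] with R hR using rect R hR

/-! ### Gamma and beta functions -/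

theorem sin_pi_mul_mul_Gamma {z : ℂ} (hz : ∀ m : ℕ, z ≠ -m) :
    sin (π * z) * Gamma z = π * (Gamma (1 - z))⁻¹ := by
  have reflection := Gamma_mul_Gamma_one_sub z
  have hΓ : Gamma z ≠ 0 := Gamma_ne_zero hz
  rcases eq_or_ne (sin (π * z)) 0 with hsin | hsin
  · have : Gamma (1 - z) = 0 := by simpa [hsin, hΓ] using reflection
    simp [hsin, this]
  · have hΓ' : Gamma (1 - z) ≠ 0 := right_ne_zero_of_mul <| reflection.trans_ne <|
      div_ne_zero (ofReal_ne_zero.2 Real.pi_ne_zero) hsin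
    rw [eq_mul_inv_iff_mul_eq₀ hΓ', mul_assoc, reflection, mul_div_cancel₀ _ hsin]

section BetaIntegral

variable (u v : ℂ)

theorem abs_exp_smul_betaIntegrand (x : ℝ) :
    |Real.exp x| • ((Real.exp x : ℂ) ^ (u - 1) * (1 - (Real.exp x : ℂ)) ^ (v - 1)) =
      exp (u * x) * (1 - exp x) ^ (v - 1) := by
  have power : (Real.exp x : ℂ) ^ (u - 1) = exp (x * (u - 1)) := by
    rw [cpow_def_of_ne_zero (ofReal_ne_zero.2 (Real.exp_pos x).ne'),
      ← ofReal_log (Real.exp_pos x).le, Real.log_exp]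
  rw [power, abs_of_pos (Real.exp_pos x), real_smul, ofReal_exp, ← mul_assoc, ← exp_add]
  ring_nf

theorem integral_exp_mul_one_sub_exp_cpow :
    ∫ x : ℝ in Set.Iic 0, exp (u * x) * (1 - exp x) ^ (v - 1) = betaIntegral u v := by
  simp_rw [← abs_exp_smul_betaIntegrand]
  rw [integral_Iic_eq_integral_Iio, ← integral_image_eq_integral_abs_deriv_smul measurableSet_Iio
      (fun x _ => (Real.hasDerivAt_exp x).hasDerivWithinAt) Real.exp_injective.injOn
      (fun x : ℝ => (x : ℂ) ^ (u - 1) * (1 - (x : ℂ)) ^ (v - 1)),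
    Real.image_exp_Iio, Real.exp_zero, betaIntegral, intervalIntegral.integral_of_le zero_le_one,
    integral_Ioc_eq_integral_Ioo]

variable {u v}

theorem integrableOn_exp_mul_one_sub_exp_cpow (hu : 0 < u.re) (hv : 0 < v.re) :
    IntegrableOn (fun x : ℝ => exp (u * x) * (1 - exp x) ^ (v - 1)) (Set.Iic 0) := by
  simp_rw [← abs_exp_smul_betaIntegrand]
  rw [integrableOn_Iic_iff_integrableOn_Iio, ← integrableOn_image_iff_integrableOn_abs_deriv_smul
      measurableSet_Iio (fun x _ => (Real.hasDerivAt_exp x).hasDerivWithinAt)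
      Real.exp_injective.injOn (fun x : ℝ => (x : ℂ) ^ (u - 1) * (1 - (x : ℂ)) ^ (v - 1)),
    Real.image_exp_Iio, Real.exp_zero, ← intervalIntegrable_iff_integrableOn_Ioo_of_le zero_le_one]
  exact betaIntegral_convergent hu hv

end BetaIntegral

/-! ### The binomial kernel -/

/-- The function `e^{-tw}(1 + e^w)^c`, whose mean over the segment from `-πi` to `πi` is the
binomial coefficient `c` over `t` (for natural `t`, the coefficient of `z^t` in `(1 + z)^c`). -/
def binomialKernel (c t w : ℂ) : ℂ :=
  exp (-t * w) * (1 + exp w) ^ c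

section BinomialKernel

variable {c : ℂ} (t : ℂ)

theorem exp_mul_binomialKernel (c s w : ℂ) :
    exp (-s * w) * binomialKernel c t w = binomialKernel c (t + s) w := by
  rw [binomialKernel, ← mul_assoc, ← exp_add, binomialKernel]
  ring_nf

theorem binomialKernel_add_of_exp_eq_neg_one (c w : ℂ) {p : ℂ} (hp : exp p = -1) :
    binomialKernel c t (w + p) = exp (-t * p) * (exp (-t * w) * (1 - exp w) ^ c) := by
  rw [binomialKernel, exp_add w, hp, mul_add, exp_add, mul_neg_one, ← sub_eq_add_neg]
  ring

theorem binomialKernel_eq_zero (hc : c ≠ 0) {p : ℂ} (hp : exp p = -1) :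
    binomialKernel c t p = 0 := by
  rw [binomialKernel, hp, add_neg_cancel, zero_cpow hc, mul_zero]

theorem one_add_exp_mem_closedBall {w : ℂ} (hw : w.re ≤ 0) :
    1 + exp w ∈ Metric.closedBall (1 : ℂ) 1 := by
  simpa [norm_exp] using hw

theorem re_nonneg_of_mem_closedBall_one {z : ℂ} (hz : z ∈ Metric.closedBall (1 : ℂ) 1) :
    0 ≤ z.re := by
  have := (re_le_norm (1 - z)).trans (mem_closedBall_iff_norm'.1 hz)
  simpa using this

theorem continuousOn_cpow_const_closedBall (hc : 0 < c.re) :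
    ContinuousOn (fun z : ℂ => z ^ c) (Metric.closedBall 1 1) := fun _ hz =>
  (continuousAt_cpow_const_of_re_pos (.inl (re_nonneg_of_mem_closedBall_one hz))
    hc).continuousWithinAt

theorem continuousOn_binomialKernel (hc : 0 < c.re) :
    ContinuousOn (binomialKernel c t) {w | w.re ≤ 0} :=
  ContinuousOn.mul (by fun_prop) <| (continuousOn_cpow_const_closedBall hc).comp (by fun_prop)
    fun _ => one_add_exp_mem_closedBall

theorem continuous_binomialKernel_mul_I (hc : 0 < c.re) :
    Continuous fun y : ℝ => binomialKernel c t (y * I) :=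
  (continuousOn_binomialKernel t hc).comp_continuous (by fun_prop) fun y => by simp

theorem differentiableOn_binomialKernel (c : ℂ) :
    DifferentiableOn ℂ (binomialKernel c t) {w | w.re < 0} := by
  intro w hw
  have norm_lt : ‖-exp w‖ < 1 := by simpa [norm_exp] using hw
  have slit : 1 + exp w ∈ slitPlane := by
    simpa using mem_slitPlane_of_norm_lt_one (norm_neg (exp w) ▸ norm_lt)
  have base : DifferentiableAt ℂ (fun w => 1 + exp w) w := by fun_prop
  exact (DifferentiableAt.mul (by fun_prop) (base.cpow_const slit)).differentiableWithinAt

theorem tendsto_integral_binomialKernel_atBot (hc : 0 < c.re) {t : ℂ} (ht : t.re < 0)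
    (a b : ℝ) :
    Tendsto (fun R : ℝ => ∫ y in a..b, binomialKernel c t (R + y * I)) atBot (nhds 0) := by
  obtain ⟨C, hC⟩ := (isCompact_closedBall (1 : ℂ) 1).exists_bound_of_continuousOn
    (continuousOn_cpow_const_closedBall hc)
  obtain ⟨D, hD⟩ := (isCompact_uIcc (a := a) (b := b)).exists_bound_of_continuousOn
    (by fun_prop : ContinuousOn (fun y : ℝ => exp (-t * (y * I))) (Set.uIcc a b))
  have kernel_bound (R : ℝ) (hR : R ≤ 0) (y : ℝ) (hy : y ∈ Set.uIoc a b) :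
      ‖binomialKernel c t (R + y * I)‖ ≤ Real.exp (-t.re * R) * (D * C) := by
    have re_nonpos : (R + y * I : ℂ).re ≤ 0 := by simpa using hR
    have norm_exp_left : ‖exp (-t * R)‖ = Real.exp (-t.re * R) := by simp [norm_exp]
    rw [binomialKernel, mul_add, exp_add, mul_assoc, norm_mul, norm_mul, norm_exp_left]
    have hD' := hD y (Set.uIoc_subset_uIcc hy)
    have hC' := hC _ (one_add_exp_mem_closedBall re_nonpos)
    have := (norm_nonneg _).trans hD'
    gcongr
  have bound_tendsto :
      Tendsto (fun R : ℝ => Real.exp (-t.re * R) * (D * C) * |b - a|) atBot (nhds 0) := by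
    have exponent := tendsto_id.const_mul_atBot (neg_pos.2 ht)
    simpa using ((Real.tendsto_exp_atBot.comp exponent).mul_const (D * C)).mul_const |b - a|
  refine squeeze_zero_norm' ?_ bound_tendsto
  filter_upwards [eventually_le_atBot 0] with R hR
  exact intervalIntegral.norm_integral_le_of_norm_le_const (kernel_bound R hR)

theorem exp_sub_exp_eq_two_I_mul_sin (z : ℂ) : exp (z * I) - exp (-(z * I)) = 2 * I * sin z := by
  rw [mul_right_comm, two_sin, mul_assoc, I_mul_I, neg_mul]
  ring

theorem I_mul_integral_binomialKernel (hc : 0 < c.re) {t : ℂ} (ht : t.re < 0) :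
    I * ∫ y in (-π)..π, binomialKernel c t (y * I) =
      2 * I * sin (π * -t) * betaIntegral (-t) (c + 1) := by
  have exp_bottom : exp ((-π : ℝ) * I) = -1 := by
    rw [ofReal_neg, neg_mul, exp_neg_pi_mul_I]
  have top (x : ℝ) := binomialKernel_add_of_exp_eq_neg_one t c x exp_pi_mul_I
  have bottom (x : ℝ) := binomialKernel_add_of_exp_eq_neg_one t c x exp_bottom
  have edge_eq := integral_exp_mul_one_sub_exp_cpow (-t) (c + 1)
  have edge_integrable := integrableOn_exp_mul_one_sub_exp_cpow (u := -t) (v := c + 1)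
    (by simpa using ht) (by simpa using hc.trans (lt_add_one _))
  simp only [add_sub_cancel_right] at edge_eq edge_integrable
  have half_strip := integral_boundary_leftHalfStrip (f := binomialKernel c t) (x₀ := 0)
    (a := -π) (b := π) ((continuousOn_binomialKernel t hc).mono fun _ hw => hw.1)
    ((differentiableOn_binomialKernel t c).mono fun _ hw => hw.1)
    (by simp only [bottom]; exact edge_integrable.const_mul _)
    (by simp only [top]; exact edge_integrable.const_mul _)
    (tendsto_integral_binomialKernel_atBot hc ht _ _)
  simp only [top, bottom, integral_const_mul, edge_eq, ofReal_zero, zero_add, smul_eq_mul,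
    ← sub_mul] at half_strip
  rw [half_strip, ← exp_sub_exp_eq_two_I_mul_sin]
  push_cast
  ring_nf

theorem integral_binomialKernel (hc : 0 < c.re) {t : ℂ} (ht : t.re < 0) :
    ∫ y in (-π)..π, binomialKernel c t (y * I) =
      2 * π * Gamma (c + 1) * ((Gamma (t + 1))⁻¹ * (Gamma (c - t + 1))⁻¹) := by
  have hnt : 0 < (-t).re := by simpa using ht
  have hc1 : 0 < (c + 1).re := by simpa using hc.trans (lt_add_one _)
  have reflection : sin (π * -t) * Gamma (-t) = π * (Gamma (t + 1))⁻¹ := by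
    rw [sin_pi_mul_mul_Gamma fun m hm => ?_, sub_neg_eq_add, add_comm]
    exact hnt.not_ge (by simp [hm])
  have beta_eq : betaIntegral (-t) (c + 1) =
      Gamma (-t) * Gamma (c + 1) * (Gamma (c - t + 1))⁻¹ := by
    have sum_eq : -t + (c + 1) = c - t + 1 := by ring
    have hΓ : Gamma (c - t + 1) ≠ 0 :=
      Gamma_ne_zero_of_re_pos (by rw [← sum_eq, add_re]; exact add_pos hnt hc1)
    rw [Gamma_mul_Gamma_eq_betaIntegral hnt hc1, sum_eq, mul_right_comm, mul_inv_cancel₀ hΓ,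
      one_mul]
  refine mul_left_cancel₀ I_ne_zero ?_
  calc I * ∫ y in (-π)..π, binomialKernel c t (y * I)
      = 2 * I * (sin (π * -t) * Gamma (-t)) * Gamma (c + 1) * (Gamma (c - t + 1))⁻¹ := by
        rw [I_mul_integral_binomialKernel hc ht, beta_eq]; ring
    _ = I * (2 * π * Gamma (c + 1) * ((Gamma (t + 1))⁻¹ * (Gamma (c - t + 1))⁻¹)) := by
        rw [reflection]; ring

end BinomialKernel

/-! ### The functions `h_{α,β}` -/

section Hfun

variable {α β : ℂ}

theorem hfun_eq_indicator (α β : ℂ) :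
    hfun α β = (Set.Ioo (-(1 : ℝ) / 2) (1 / 2)).indicator fun φ =>
      binomialKernel (β - α) (-α) ((2 * π * φ : ℝ) * I) / Gamma (β - α + 1) := by
  funext φ
  have angle : ((2 * π * φ : ℝ) : ℂ) * I = 2 * (π : ℂ) * I * φ := by push_cast; ring
  have twist : - -α * (2 * (π : ℂ) * I * φ) = 2 * (π : ℂ) * I * α * φ := by ring
  simp only [hfun, Set.indicator_apply, binomialKernel, angle, twist]

theorem support_hfun_subset (α β : ℂ) :
    Function.support (hfun α β) ⊆ Set.Icc (-(1 / 2)) (1 / 2) := by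
  rw [hfun_eq_indicator, ← neg_div]
  exact Set.support_indicator_subset.trans Set.Ioo_subset_Icc_self

theorem hasCompactSupport_hfun (α β : ℂ) : HasCompactSupport (hfun α β) :=
  .of_support_subset_isCompact isCompact_Icc (support_hfun_subset α β)

theorem continuous_hfun (h : 0 < (β - α).re) : Continuous (hfun α β) := by
  have hne : β - α ≠ 0 := by
    intro h0
    simp [h0] at h
  rw [hfun_eq_indicator]
  refine continuous_indicator (fun φ hφ => ?_) (Continuous.continuousOn ?_)
  · have exp_eq : exp ((2 * π * φ : ℝ) * I) = -1 := by
      rw [frontier_Ioo (by norm_num)] at hφ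
      rcases hφ with rfl | rfl
      · rw [← exp_neg_pi_mul_I]; push_cast; ring_nf
      · rw [← exp_pi_mul_I]; push_cast; ring_nf
    rw [binomialKernel_eq_zero _ hne exp_eq, zero_div]
  · exact ((continuous_binomialKernel_mul_I (-α) h).comp
      (by fun_prop : Continuous fun φ : ℝ => 2 * π * φ)).div_const _

theorem integrable_hfun (h : 0 < (β - α).re) : Integrable (hfun α β) :=
  (continuous_hfun h).integrable_of_hasCompactSupport (hasCompactSupport_hfun α β)

theorem fourierLaplace_hfun_eq_integral (α β s : ℂ) :
    fourierLaplace (hfun α β) s =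
      (∫ y in (-π)..π, binomialKernel (β - α) (s - α) (y * I)) / (2 * π * Gamma (β - α + 1)) := by
  set K : ℝ → ℂ := fun y => binomialKernel (β - α) (s - α) (y * I) with hK
  have integrand : (fun φ : ℝ => exp (-(2 * (π : ℂ) * I) * s * φ) * hfun α β φ) =
      (Set.Ioo (-(1 : ℝ) / 2) (1 / 2)).indicator fun φ => K (2 * π * φ) / Gamma (β - α + 1) := by
    funext φ
    have angle : -(2 * (π : ℂ) * I) * s * φ = -s * ((2 * π * φ : ℝ) * I) := by push_cast; ring
    rw [hfun_eq_indicator, angle]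
    simp only [Set.indicator_apply, mul_ite, mul_zero, ← mul_div_assoc, exp_mul_binomialKernel,
      neg_add_eq_sub, hK]
  rw [fourierLaplace, integrand, integral_indicator measurableSet_Ioo,
    ← integral_Ioc_eq_integral_Ioo, ← intervalIntegral.integral_of_le (by norm_num),
    intervalIntegral.integral_div, intervalIntegral.integral_comp_mul_left K Real.two_pi_pos.ne',
    show 2 * π * (-1 / 2) = -π by ring, show 2 * π * (1 / 2) = π by ring, real_smul]
  push_cast
  rw [← div_eq_inv_mul, div_div]

theorem fourierLaplace_hfun (h : 0 < (β - α).re) (s : ℂ) :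
    fourierLaplace (hfun α β) s = (Gamma (s - α + 1))⁻¹ * (Gamma (-s + β + 1))⁻¹ := by
  have on_halfPlane {s : ℂ} (hs : s.re < α.re) :
      fourierLaplace (hfun α β) s = (Gamma (s - α + 1))⁻¹ * (Gamma (-s + β + 1))⁻¹ := by
    have hΓ : Gamma (β - α + 1) ≠ 0 :=
      Gamma_ne_zero_of_re_pos (by simpa using h.trans (lt_add_one _))
    have hπ : (2 * π : ℂ) ≠ 0 := mul_ne_zero two_ne_zero (ofReal_ne_zero.2 Real.pi_ne_zero)
    rw [fourierLaplace_hfun_eq_integral, integral_binomialKernel h (by simpa using hs),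
      mul_div_cancel_left₀ _ (mul_ne_zero hπ hΓ)]
    ring_nf
  have lhs_diff := differentiable_fourierLaplace (integrable_hfun h) (hasCompactSupport_hfun α β)
  have rhs_diff : Differentiable ℂ fun s =>
      (Gamma (s - α + 1))⁻¹ * (Gamma (-s + β + 1))⁻¹ :=
    (differentiable_one_div_Gamma.comp (by fun_prop : Differentiable ℂ fun s => s - α + 1)).mul
      (differentiable_one_div_Gamma.comp (by fun_prop : Differentiable ℂ fun s => -s + β + 1))
  have halfPlane_nhds : {s : ℂ | s.re < α.re} ∈ nhds (α - 1) :=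
    (isOpen_lt continuous_re continuous_const).mem_nhds (by simp)
  have := AnalyticOnNhd.eq_of_eventuallyEq (z₀ := α - 1)
    (lhs_diff.differentiableOn.analyticOnNhd isOpen_univ)
    (rhs_diff.differentiableOn.analyticOnNhd isOpen_univ)
    (mem_of_superset halfPlane_nhds fun s hs => on_halfPlane hs)
  exact congrFun this s

end Hfun

/-- For `α₁,…,αₙ,β₁,…,βₙ ∈ ℂ` with `Re(βᵢ - αᵢ) > 0`, the `n`-fold
convolution `H = h_{α₁,β₁} ∗ ⋯ ∗ h_{αₙ,βₙ}` is continuous, supported in `[-n/2, n/2]`, and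
its Fourier transform is the balanced gamma product: `∫ e^{-2πisφ} H(φ) dφ = 𝚪_{α,β}(s)`
for all `s ∈ ℂ`. -/
theorem convolution_fourier_transform (n : ℕ) (hn : 1 ≤ n) (α β : Fin n → ℂ)
    (h : ∀ i, 0 < (β i - α i).re)
    (H : ℝ → ℂ) (hH : H = convList (List.ofFn fun i => hfun (α i) (β i))) :
    Continuous H ∧
    (∀ φ : ℝ, φ ∉ Set.Icc (-(n : ℝ) / 2) ((n : ℝ) / 2) → H φ = 0) ∧
    (∀ s : ℂ,
      (∫ φ : ℝ, Complex.exp (-(2 * (π : ℂ) * Complex.I) * s * (φ : ℂ)) * H φ) =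
        gammaProd α β s) := by
  set L := List.ofFn fun i => hfun (α i) (β i) with hL
  have L_cont : ∀ f ∈ L, Continuous f := List.forall_mem_ofFn_iff.2 fun i => continuous_hfun (h i)
  have L_compact : ∀ f ∈ L, HasCompactSupport f :=
    List.forall_mem_ofFn_iff.2 fun i => hasCompactSupport_hfun (α i) (β i)
  have L_supp : ∀ f ∈ L, Function.support f ⊆ Set.Icc (-(1 / 2)) (1 / 2) :=
    List.forall_mem_ofFn_iff.2 fun i => support_hfun_subset (α i) (β i)
  have L_ne_nil : L ≠ [] := by
    rw [hL, Ne, List.ofFn_eq_nil_iff]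
    lia
  subst hH
  refine ⟨continuous_convList L_cont L_compact, fun φ hφ => ?_, fun s => ?_⟩
  · refine Function.notMem_support.1 fun hmem => hφ ?_
    simpa [hL, div_eq_mul_inv] using support_convList_subset L_supp hmem
  · calc fourierLaplace (convList L) s
        = (L.map fun f => fourierLaplace f s).prod :=
          fourierLaplace_convList L_ne_nil fun f hf => integrable_exp_mul_of_hasCompactSupport
            ((L_cont f hf).integrable_of_hasCompactSupport (L_compact f hf)) (L_compact f hf) _
      _ = ∏ i, (Gamma (s - α i + 1))⁻¹ * (Gamma (-s + β i + 1))⁻¹ := by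
          simp only [hL, List.map_ofFn, List.prod_ofFn, Function.comp_apply,
            fourierLaplace_hfun (h _)]
      _ = gammaProd α β s := Finset.prod_mul_distrib
end
end
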